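/- Push-forwards of controlled rough paths are controlled rough paths: Let M be a d-dimensional and M̃ a d̃-dimensional C^∞ manifold (both without boundary, Hausdorff, second countable), let f : M → M̃ be a smooth map, let X = (x, 𝕏) be a weak-geometric p-rough path with control ω on [0,T], and let (y, y†) be a chart-controlled rough path in M controlled by X. Then the pair (f ∘ y, s ↦ f_{* y_s} ∘ y_s†), where f_{* y_s} : T_{y_s}M → T_{f(y_s)}M̃ is the differential of f at y_s, is a chart-controlled rough path in M̃ controlled by X. -/

import Mathlib

noncomputable section

open scoped BigOperators

/-- `ℝ^n` with the Euclidean norm. -/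
abbrev Euc (n : ℕ) : Type := EuclideanSpace ℝ (Fin n)

/-- The `i`-th standard basis vector of `ℝ^n`. -/
def eb {n : ℕ} (i : Fin n) : Euc n := EuclideanSpace.single i 1

/-- Tensor product of two Euclidean vectors, realized in `ℝ^{n×m}` with the Euclidean norm. -/
def tensorE {n m : ℕ} (v : Euc n) (w : Euc m) : EuclideanSpace ℝ (Fin n × Fin m) :=
  (EuclideanSpace.equiv (Fin n × Fin m) ℝ).symm fun p => v p.1 * w p.2

/-- Application of the (unique) linear extension of a bilinear map `B` to a tensor
`X ∈ ℝ^n ⊗ ℝ^m ≅ ℝ^{n × m}`. -/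
def tapply {n m : ℕ} {V : Type*} [NormedAddCommGroup V] [NormedSpace ℝ V]
    (B : Euc n → Euc m → V) (X : EuclideanSpace ℝ (Fin n × Fin m)) : V :=
  ∑ q : Fin n × Fin m, X q • B (eb q.1) (eb q.2)
/-- `ω` is a control on the simplex `{(s,t) : 0 ≤ s ≤ t ≤ T}`. -/
structure IsControl (T : ℝ) (ω : ℝ → ℝ → ℝ) : Prop where
  cont : ContinuousOn (fun q : ℝ × ℝ => ω q.1 q.2)
    {q : ℝ × ℝ | 0 ≤ q.1 ∧ q.1 ≤ q.2 ∧ q.2 ≤ T}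
  nonneg : ∀ ⦃s t : ℝ⦄, 0 ≤ s → s ≤ t → t ≤ T → 0 ≤ ω s t
  zero : ∀ ⦃s : ℝ⦄, 0 ≤ s → s ≤ T → ω s s = 0
  superadditive : ∀ ⦃s t u : ℝ⦄, 0 ≤ s → s ≤ t → t ≤ u → u ≤ T → ω s t + ω t u ≤ ω s u
/-- `(x, XX)` is a `p`-rough path with control `ω` on `[0,T]`. -/
structure IsRoughPath (T p : ℝ) {k : ℕ} (ω : ℝ → ℝ → ℝ)
    (x : ℝ → Euc k) (XX : ℝ → ℝ → EuclideanSpace ℝ (Fin k × Fin k)) : Prop where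
  cont_x : ContinuousOn x (Set.Icc 0 T)
  cont_XX : ContinuousOn (fun q : ℝ × ℝ => XX q.1 q.2)
    {q : ℝ × ℝ | 0 ≤ q.1 ∧ q.1 ≤ q.2 ∧ q.2 ≤ T}
  chen : ∀ ⦃s t u : ℝ⦄, 0 ≤ s → s ≤ t → t ≤ u → u ≤ T →
    XX s u = XX s t + XX t u + tensorE (x t - x s) (x u - x t)
  bound_x : ∀ ⦃s t : ℝ⦄, 0 ≤ s → s ≤ t → t ≤ T → ‖x t - x s‖ ≤ ω s t ^ (1 / p)
  bound_XX : ∀ ⦃s t : ℝ⦄, 0 ≤ s → s ≤ t → t ≤ T → ‖XX s t‖ ≤ ω s t ^ (2 / p)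
/-- The rough path `(x, XX)` is weak-geometric: the symmetric part of `XX s t` is
`(1/2) x_{s,t} ⊗ x_{s,t}`. -/
def IsWeakGeometric (T : ℝ) {k : ℕ} (x : ℝ → Euc k)
    (XX : ℝ → ℝ → EuclideanSpace ℝ (Fin k × Fin k)) : Prop :=
  ∀ ⦃s t : ℝ⦄, 0 ≤ s → s ≤ t → t ≤ T → ∀ i j : Fin k,
    XX s t (i, j) + XX s t (j, i) = (x t - x s) i * (x t - x s) j

open scoped Manifold

/-- The differential `dφ_m : T_mM → ℝ^d` of a chart `φ`, with target read as `ℝ^d`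
(recall `TangentSpace (𝓡 d) pt` is by definition `ℝ^d`). -/
def chartDeriv {d : ℕ} {M : Type*} [TopologicalSpace M] [ChartedSpace (Euc d) M]
    (φ : OpenPartialHomeomorph M (Euc d)) (m : M) :
    TangentSpace (𝓡 d) m →L[ℝ] Euc d :=
  mfderiv (𝓡 d) (𝓡 d) φ m

/-- `(y, y')` is a chart-controlled rough path in the manifold `M`, controlled by the rough
path with first level `x` and control `ω` on `[0,T]`. -/
def IsChartCRP (T p : ℝ) {k : ℕ} (ω : ℝ → ℝ → ℝ) (x : ℝ → Euc k)
    {d : ℕ} {M : Type*} [TopologicalSpace M] [ChartedSpace (Euc d) M]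
    [IsManifold (𝓡 d) (⊤ : ℕ∞) M]
    (y : ℝ → M) (y' : (s : ℝ) → Euc k →L[ℝ] TangentSpace (𝓡 d) (y s)) : Prop :=
  ∀ φ : OpenPartialHomeomorph M (Euc d),
    φ ∈ (contDiffGroupoid (⊤ : ℕ∞) (𝓡 d)).maximalAtlas M →
    ∀ a b : ℝ, 0 ≤ a → a ≤ b → b ≤ T → (∀ s ∈ Set.Icc a b, y s ∈ φ.source) →
    ∃ C : ℝ, ∀ ⦃s t : ℝ⦄, a ≤ s → s ≤ t → t ≤ b →
      ‖φ (y t) - φ (y s) - chartDeriv φ (y s) (y' s (x t - x s))‖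
        ≤ C * ω s t ^ (2 / p) ∧
      ‖(chartDeriv φ (y t)).comp (y' t) - (chartDeriv φ (y s)).comp (y' s)‖
        ≤ C * ω s t ^ (1 / p)

/-! In charts, `y` becomes a vector-valued path controlled by `x`, and the chain rule turns the
push-forward by `f` into composition with the `C²` map `ψ ∘ f ∘ φ⁻¹`. On a convex set where the
derivative of this map is Lipschitz, its second-order Taylor estimate preserves controlledness, all
errors being measured against `ω ^ (1 / p)`. A single chart `φ` need not contain `y [a, b]`, but the
remainder `z_{s,t} - Z_s x_{s,t}` is additive up to `Z_{s,m} x_{m,t}`, which is again of second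
order; so controlledness on adjacent intervals glues, and it suffices to argue locally in time. -/

open Asymptotics Filter Set
open scoped Topology

/-- The pairs of times `(s, t)` with `a ≤ s ≤ t ≤ b`, the index set of the increments of a path
on `[a, b]`. -/
def timeSimplex (a b : ℝ) : Set (ℝ × ℝ) := {q | a ≤ q.1 ∧ q.1 ≤ q.2 ∧ q.2 ≤ b}

/-- `ρ` is a function of intervals, increasing under inclusion, that dominates the increments
of `x` on `[a, b]`. The example to keep in mind is `ρ (s, t) = ω s t ^ (1 / p)`. -/
structure IsIncrementBound {V : Type*} [NormedAddCommGroup V] (ρ : ℝ × ℝ → ℝ) (x : ℝ → V)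
    (a b : ℝ) : Prop where
  mono : ∀ q ∈ timeSimplex a b, ∀ r ∈ timeSimplex q.1 q.2, ρ r ≤ ρ q
  norm_sub_le : ∀ q ∈ timeSimplex a b, ‖x q.2 - x q.1‖ ≤ ρ q

/-- The vector-valued path `z` is controlled by `x` on `[a, b]` with Gubinelli derivative `Z`,
first-order errors being measured by `ρ`. The existence of a constant valid for all
`a ≤ s ≤ t ≤ b` is expressed as `=O` along a principal filter. -/
structure IsControlledOn {V E : Type*} [NormedAddCommGroup V] [NormedSpace ℝ V]
    [NormedAddCommGroup E] [NormedSpace ℝ E] (ρ : ℝ × ℝ → ℝ) (x : ℝ → V) (a b : ℝ)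
    (z : ℝ → E) (Z : ℝ → V →L[ℝ] E) : Prop where
  remainder : (fun q : ℝ × ℝ => z q.2 - z q.1 - Z q.1 (x q.2 - x q.1))
    =O[𝓟 (timeSimplex a b)] fun q => ρ q ^ 2
  deriv : (fun q : ℝ × ℝ => Z q.2 - Z q.1) =O[𝓟 (timeSimplex a b)] ρ

theorem isBigO_of_isBoundedBilinearMap {α E F G : Type*}
    [NormedAddCommGroup E] [NormedSpace ℝ E] [NormedAddCommGroup F] [NormedSpace ℝ F]
    [NormedAddCommGroup G] [NormedSpace ℝ G] {B : E × F → G} (hB : IsBoundedBilinearMap ℝ B)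
    {l : Filter α} {u : α → E} {v : α → F} {g h : α → ℝ} (hu : u =O[l] g) (hv : v =O[l] h) :
    (fun q => B (u q, v q)) =O[l] fun q => g q * h q :=
  (hB.isBigO.comp_tendsto (k := fun q => (u q, v q)) le_top).trans
    (hu.norm_left.mul hv.norm_left)

section IncrementBound

variable {V : Type*} [NormedAddCommGroup V] {ρ : ℝ × ℝ → ℝ} {x : ℝ → V} {a b : ℝ}

theorem timeSimplex_subset {a' b' : ℝ} (ha : a ≤ a') (hb : b' ≤ b) :
    timeSimplex a' b' ⊆ timeSimplex a b :=
  fun _ hq => ⟨ha.trans hq.1, hq.2.1, hq.2.2.trans hb⟩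

theorem timeSimplex_subset_union (a m b : ℝ) :
    timeSimplex a b ⊆ (timeSimplex a m ∪ timeSimplex m b) ∪ Icc a m ×ˢ Icc m b := by
  rintro q ⟨ha, hq, hb⟩
  rcases le_total q.2 m with h₂ | h₂
  · exact .inl (.inl ⟨ha, hq, h₂⟩)
  rcases le_total m q.1 with h₁ | h₁
  · exact .inl (.inr ⟨h₁, hq, hb⟩)
  · exact .inr ⟨⟨ha, h₁⟩, h₂, hb⟩

namespace IsIncrementBound

theorem subinterval {a' b' : ℝ} (h : IsIncrementBound ρ x a b) (ha : a ≤ a') (hb : b' ≤ b) :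
    IsIncrementBound ρ x a' b' where
  mono q hq := h.mono q (timeSimplex_subset ha hb hq)
  norm_sub_le q hq := h.norm_sub_le q (timeSimplex_subset ha hb hq)

theorem nonneg (h : IsIncrementBound ρ x a b) {q : ℝ × ℝ} (hq : q ∈ timeSimplex a b) : 0 ≤ ρ q :=
  (norm_nonneg _).trans (h.norm_sub_le q hq)

theorem isBigO_sub (h : IsIncrementBound ρ x a b) :
    (fun q : ℝ × ℝ => x q.2 - x q.1) =O[𝓟 (timeSimplex a b)] ρ :=
  .of_norm_eventuallyLE (eventually_principal.2 h.norm_sub_le)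

theorem isBigO_comp (h : IsIncrementBound ρ x a b) {S : Set (ℝ × ℝ)} (hS : S ⊆ timeSimplex a b)
    {g : ℝ × ℝ → ℝ × ℝ} (hg : ∀ q ∈ S, g q ∈ timeSimplex q.1 q.2) :
    (fun q => ρ (g q)) =O[𝓟 S] ρ := by
  refine .of_norm_eventuallyLE (eventually_principal.2 fun q hq => ?_)
  have hgq : g q ∈ timeSimplex a b := timeSimplex_subset (hS hq).1 (hS hq).2.2 (hg q hq)
  exact (Real.norm_of_nonneg (h.nonneg hgq)).trans_le (h.mono q (hS hq) _ (hg q hq))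

theorem isBigO_one (h : IsIncrementBound ρ x a b) :
    ρ =O[𝓟 (timeSimplex a b)] fun _ => (1 : ℝ) := by
  refine isBigO_principal.2 ⟨ρ (a, b), fun q hq => ?_⟩
  rw [norm_one, mul_one, Real.norm_of_nonneg (h.nonneg hq)]
  exact h.mono (a, b) ⟨le_rfl, hq.1.trans (hq.2.1.trans hq.2.2), le_rfl⟩ q hq

theorem isBigO_one_of_sub {E : Type*} [NormedAddCommGroup E] {g : ℝ → E}
    (h : IsIncrementBound ρ x a b)
    (hg : (fun q : ℝ × ℝ => g q.2 - g q.1) =O[𝓟 (timeSimplex a b)] ρ) :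
    (fun q : ℝ × ℝ => g q.1) =O[𝓟 (timeSimplex a b)] fun _ => (1 : ℝ) := by
  have htends : Tendsto (fun q : ℝ × ℝ => (a, q.1)) (𝓟 (timeSimplex a b)) (𝓟 (timeSimplex a b)) :=
    tendsto_principal_principal.2 fun q hq => ⟨le_rfl, hq.1, hq.2.1.trans hq.2.2⟩
  have hsub : (fun q : ℝ × ℝ => g q.1 - g a) =O[𝓟 (timeSimplex a b)] fun _ => (1 : ℝ) :=
    (hg.trans h.isBigO_one).comp_tendsto htends
  simpa only [sub_add_cancel] using hsub.add (isBigO_const_const (g a) one_ne_zero _)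

end IsIncrementBound

end IncrementBound

theorem property_Icc_of_locally {P : ℝ → ℝ → Prop} {a b : ℝ} (hab : a ≤ b)
    (concat : ∀ m n, a ≤ m → m ≤ n → n ≤ b → P a m → P m n → P a n)
    (hloc : ∀ s ∈ Icc a b, ∃ U ∈ 𝓝[Icc a b] s,
      ∀ u v, a ≤ u → u ≤ v → v ≤ b → Icc u v ⊆ U → P u v) :
    P a b := by
  have hloc' : ∀ s : Icc a b, ∃ O : Set (Icc a b), IsOpen O ∧ s ∈ O ∧
      ∀ u v : Icc a b, u ≤ v → Icc u v ⊆ O → P u v := by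
    rintro ⟨s, hs⟩
    obtain ⟨U, hU, hP⟩ := hloc s hs
    obtain ⟨O, hO, hsO, hOU⟩ := mem_nhdsWithin.1 hU
    refine ⟨Subtype.val ⁻¹' O, hO.preimage continuous_subtype_val, hsO, fun u v huv hsub => ?_⟩
    refine hP u v u.2.1 huv v.2.2 fun t ht => ?_
    have htI : t ∈ Icc a b := ⟨u.2.1.trans ht.1, ht.2.trans v.2.2⟩
    exact hOU ⟨hsub (show (⟨t, htI⟩ : Icc a b) ∈ Icc u v from ht), htI⟩
  choose O hO hmem hP using hloc'
  obtain ⟨τ, hτ₀, hτ, ⟨n, hn⟩, hsub⟩ := exists_monotone_Icc_subset_open_cover_Icc hab hO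
    fun s _ => mem_iUnion.2 ⟨s, hmem s⟩
  have piece (j : ℕ) : P (τ j) (τ (j + 1)) :=
    let ⟨i, hi⟩ := hsub j
    hP i _ _ (hτ j.le_succ) hi
  have initial (j : ℕ) : P a (τ (j + 1)) := by
    induction j with
    | zero => simpa only [hτ₀] using piece 0
    | succ j ih =>
      exact concat _ _ (τ (j + 1)).2.1 (hτ (j + 1).le_succ) (τ (j + 2)).2.2 ih (piece (j + 1))
  simpa only [hn (n + 1) n.le_succ] using initial n

section Controlled

variable {V E F : Type*} [NormedAddCommGroup V] [NormedSpace ℝ V]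
  [NormedAddCommGroup E] [NormedSpace ℝ E] [NormedAddCommGroup F] [NormedSpace ℝ F]
  {ρ : ℝ × ℝ → ℝ} {x : ℝ → V} {a b : ℝ} {z : ℝ → E} {Z : ℝ → V →L[ℝ] E}

namespace IsControlledOn

theorem congr {z' : ℝ → E} {Z' : ℝ → V →L[ℝ] E} (h : IsControlledOn ρ x a b z Z)
    (hz : EqOn z z' (Icc a b)) (hZ : EqOn Z Z' (Icc a b)) : IsControlledOn ρ x a b z' Z' := by
  have hmem : ∀ᶠ q in 𝓟 (timeSimplex a b), q.1 ∈ Icc a b ∧ q.2 ∈ Icc a b :=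
    eventually_principal.2 fun q hq =>
      ⟨⟨hq.1, hq.2.1.trans hq.2.2⟩, hq.1.trans hq.2.1, hq.2.2⟩
  constructor
  · refine h.remainder.congr' (hmem.mono fun q hq => ?_) .rfl
    simp only [hz hq.1, hz hq.2, hZ hq.1]
  · refine h.deriv.congr' (hmem.mono fun q hq => ?_) .rfl
    simp only [hZ hq.1, hZ hq.2]

theorem isBigO_rectangle {m : ℝ} (hρ : IsIncrementBound ρ x a b)
    (h₁ : IsControlledOn ρ x a m z Z) (h₂ : IsControlledOn ρ x m b z Z) :
    (fun q : ℝ × ℝ => z q.2 - z q.1 - Z q.1 (x q.2 - x q.1))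
        =O[𝓟 (Icc a m ×ˢ Icc m b)] (fun q => ρ q ^ 2) ∧
      (fun q : ℝ × ℝ => Z q.2 - Z q.1) =O[𝓟 (Icc a m ×ˢ Icc m b)] ρ := by
  set R := Icc a m ×ˢ Icc m b
  have hR : R ⊆ timeSimplex a b := fun q hq => ⟨hq.1.1, hq.1.2.trans hq.2.1, hq.2.2⟩
  have hleft : Tendsto (fun q : ℝ × ℝ => (q.1, m)) (𝓟 R) (𝓟 (timeSimplex a m)) :=
    tendsto_principal_principal.2 fun q hq => ⟨hq.1.1, hq.1.2, le_rfl⟩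
  have hright : Tendsto (fun q : ℝ × ℝ => (m, q.2)) (𝓟 R) (𝓟 (timeSimplex m b)) :=
    tendsto_principal_principal.2 fun q hq => ⟨le_rfl, hq.2.1, hq.2.2⟩
  have hρleft : (fun q : ℝ × ℝ => ρ (q.1, m)) =O[𝓟 R] ρ :=
    hρ.isBigO_comp hR fun q hq => ⟨le_rfl, hq.1.2, hq.2.1⟩
  have hρright : (fun q : ℝ × ℝ => ρ (m, q.2)) =O[𝓟 R] ρ :=
    hρ.isBigO_comp hR fun q hq => ⟨hq.1.2, hq.2.1, le_rfl⟩
  have hZleft : (fun q : ℝ × ℝ => Z m - Z q.1) =O[𝓟 R] ρ :=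
    (h₁.deriv.comp_tendsto hleft).trans hρleft
  have hZright : (fun q : ℝ × ℝ => Z q.2 - Z m) =O[𝓟 R] ρ :=
    (h₂.deriv.comp_tendsto hright).trans hρright
  have hxright : (fun q : ℝ × ℝ => x q.2 - x m) =O[𝓟 R] ρ :=
    (hρ.isBigO_sub.comp_tendsto (k := fun q : ℝ × ℝ => (m, q.2)) <|
      tendsto_principal_principal.2 fun q hq =>
        ⟨hq.1.1.trans hq.1.2, hq.2.1, hq.2.2⟩).trans hρright
  refine ⟨?_, (hZright.add hZleft).congr_left fun q => sub_add_sub_cancel _ _ _⟩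
  have hcross : (fun q : ℝ × ℝ => (Z m - Z q.1) (x q.2 - x m)) =O[𝓟 R] fun q => ρ q ^ 2 := by
    simpa only [sq] using
      isBigO_of_isBoundedBilinearMap isBoundedBilinearMap_apply hZleft hxright
  refine ((((h₂.remainder.comp_tendsto hright).trans (hρright.pow 2)).add
    ((h₁.remainder.comp_tendsto hleft).trans (hρleft.pow 2))).add hcross).congr_left fun q => ?_
  simp only [Function.comp_apply, map_sub, sub_apply]
  abel

theorem concat {m : ℝ} (hρ : IsIncrementBound ρ x a b)
    (h₁ : IsControlledOn ρ x a m z Z) (h₂ : IsControlledOn ρ x m b z Z) :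
    IsControlledOn ρ x a b z Z := by
  have hle : 𝓟 (timeSimplex a b) ≤
      (𝓟 (timeSimplex a m) ⊔ 𝓟 (timeSimplex m b)) ⊔ 𝓟 (Icc a m ×ˢ Icc m b) := by
    simpa only [sup_principal, principal_mono] using timeSimplex_subset_union a m b
  obtain ⟨hrem, hderiv⟩ := isBigO_rectangle hρ h₁ h₂
  exact ⟨((h₁.remainder.sup h₂.remainder).sup hrem).mono hle,
    ((h₁.deriv.sup h₂.deriv).sup hderiv).mono hle⟩

theorem of_locally (hρ : IsIncrementBound ρ x a b) (hab : a ≤ b)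
    (hloc : ∀ s ∈ Icc a b, ∃ U ∈ 𝓝[Icc a b] s,
      ∀ u v, a ≤ u → u ≤ v → v ≤ b → Icc u v ⊆ U → IsControlledOn ρ x u v z Z) :
    IsControlledOn ρ x a b z Z :=
  property_Icc_of_locally hab
    (fun _ _ _ _ hn h₁ h₂ => h₁.concat (hρ.subinterval le_rfl hn) h₂) hloc

theorem isBigO_sub (hρ : IsIncrementBound ρ x a b) (h : IsControlledOn ρ x a b z Z) :
    (fun q : ℝ × ℝ => z q.2 - z q.1) =O[𝓟 (timeSimplex a b)] ρ := by
  have hsq : (fun q => ρ q ^ 2) =O[𝓟 (timeSimplex a b)] ρ := by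
    simpa only [sq, mul_one] using (isBigO_refl ρ _).mul hρ.isBigO_one
  have hlin : (fun q : ℝ × ℝ => Z q.1 (x q.2 - x q.1)) =O[𝓟 (timeSimplex a b)] ρ := by
    simpa only [one_mul] using isBigO_of_isBoundedBilinearMap isBoundedBilinearMap_apply
      (hρ.isBigO_one_of_sub h.deriv) hρ.isBigO_sub
  simpa only [sub_add_cancel] using (h.remainder.trans hsq).add hlin

end IsControlledOn

theorem norm_sub_sub_fderiv_le_of_lipschitzOnWith {B : Set E} (hB : Convex ℝ B) {G : E → F}
    {G' : E → E →L[ℝ] F} (hG : ∀ v ∈ B, HasFDerivWithinAt G (G' v) B v) {K : NNReal}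
    (hK : LipschitzOnWith K G' B) {v w : E} (hv : v ∈ B) (hw : w ∈ B) :
    ‖G w - G v - G' v (w - v)‖ ≤ K * ‖w - v‖ ^ 2 := by
  have hseg : segment ℝ v w ⊆ B := hB.segment_subset hv hw
  rw [sq, ← mul_assoc]
  refine (convex_segment v w).norm_image_sub_le_of_norm_hasFDerivWithin_le'
    (fun u hu => (hG u (hseg hu)).mono hseg) (fun u hu => ?_)
    (left_mem_segment ℝ v w) (right_mem_segment ℝ v w)
  calc ‖G' u - G' v‖ ≤ K * ‖u - v‖ := hK.norm_sub_le (hseg hu) hv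
    _ ≤ K * ‖w - v‖ := by gcongr; exact norm_sub_le_of_mem_segment hu

theorem IsControlledOn.comp_of_lipschitzOnWith (hρ : IsIncrementBound ρ x a b)
    (hz : IsControlledOn ρ x a b z Z) {B : Set E} (hB : Convex ℝ B) (hzB : MapsTo z (Icc a b) B)
    {G : E → F} {G' : E → E →L[ℝ] F} (hG : ∀ v ∈ B, HasFDerivWithinAt G (G' v) B v)
    {K : NNReal} (hK : LipschitzOnWith K G' B) :
    IsControlledOn ρ x a b (fun s => G (z s)) (fun s => (G' (z s)).comp (Z s)) := by
  have hfst : ∀ q ∈ timeSimplex a b, z q.1 ∈ B := fun q hq => hzB ⟨hq.1, hq.2.1.trans hq.2.2⟩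
  have hsnd : ∀ q ∈ timeSimplex a b, z q.2 ∈ B := fun q hq => hzB ⟨hq.1.trans hq.2.1, hq.2.2⟩
  have hz_sub := hz.isBigO_sub hρ
  have hG'_sub : (fun q : ℝ × ℝ => G' (z q.2) - G' (z q.1)) =O[𝓟 (timeSimplex a b)] ρ :=
    (isBigO_principal.2 ⟨K, fun q hq => hK.norm_sub_le (hsnd q hq) (hfst q hq)⟩).trans hz_sub
  have hZ_one := hρ.isBigO_one_of_sub hz.deriv
  have hG'_one := hρ.isBigO_one_of_sub (g := fun s => G' (z s)) hG'_sub
  have hG'_one_snd : (fun q : ℝ × ℝ => G' (z q.2)) =O[𝓟 (timeSimplex a b)] fun _ => (1 : ℝ) := by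
    simpa only [sub_add_cancel] using (hG'_sub.trans hρ.isBigO_one).add hG'_one
  constructor
  · have taylor : (fun q : ℝ × ℝ => G (z q.2) - G (z q.1) - G' (z q.1) (z q.2 - z q.1))
        =O[𝓟 (timeSimplex a b)] fun q => ρ q ^ 2 := by
      refine (isBigO_principal.2 ⟨K, fun q hq => ?_⟩).trans (hz_sub.norm_left.pow 2)
      rw [norm_pow, norm_norm]
      exact norm_sub_sub_fderiv_le_of_lipschitzOnWith hB hG hK (hfst q hq) (hsnd q hq)
    have hlin := isBigO_of_isBoundedBilinearMap isBoundedBilinearMap_apply hG'_one hz.remainder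
    simp only [one_mul] at hlin
    refine (taylor.add hlin).congr_left fun q => ?_
    simp only [map_sub, ContinuousLinearMap.comp_apply]
    abel
  · have h₁ := isBigO_of_isBoundedBilinearMap isBoundedBilinearMap_comp hG'_one_snd hz.deriv
    have h₂ := isBigO_of_isBoundedBilinearMap isBoundedBilinearMap_comp hG'_sub hZ_one
    simp only [one_mul, mul_one] at h₁ h₂
    refine (h₁.add h₂).congr_left fun q => ?_
    rw [ContinuousLinearMap.comp_sub, ContinuousLinearMap.sub_comp]
    abel

end Controlled

theorem exists_ball_lipschitzOnWith_fderiv {E F : Type*} [NormedAddCommGroup E] [NormedSpace ℝ E]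
    [NormedAddCommGroup F] [NormedSpace ℝ F] {G : E → F} {v : E} (hG : ContDiffAt ℝ 2 G v) :
    ∃ r > 0, (∀ w ∈ Metric.ball v r, DifferentiableAt ℝ G w) ∧
      ∃ K, LipschitzOnWith K (fderiv ℝ G) (Metric.ball v r) := by
  have hdiff : ∀ᶠ w in 𝓝 v, DifferentiableAt ℝ G w :=
    (hG.eventually (by simp)).mono fun w hw => hw.differentiableAt two_ne_zero
  obtain ⟨K, S, hS, hK⟩ :=
    (hG.fderiv_right (m := 1) one_add_one_eq_two.le).exists_lipschitzOnWith
  obtain ⟨r, hr, hball⟩ := Metric.mem_nhds_iff.1 (inter_mem hdiff hS)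
  exact ⟨r, hr, fun w hw => (hball hw).1, K, hK.mono fun w hw => (hball hw).2⟩

section Charts

variable {E E' : Type*} [NormedAddCommGroup E] [NormedSpace ℝ E]
  [NormedAddCommGroup E'] [NormedSpace ℝ E']
  {M : Type*} [TopologicalSpace M] [ChartedSpace E M]
  {M' : Type*} [TopologicalSpace M'] [ChartedSpace E' M']
  {f : M → M'} {φ : OpenPartialHomeomorph M E} {ψ : OpenPartialHomeomorph M' E'} {m : M}

theorem contDiffAt_comp_chart_symm {n : WithTop ℕ∞}
    (hφ : φ ∈ IsManifold.maximalAtlas 𝓘(ℝ, E) n M)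
    (hψ : ψ ∈ IsManifold.maximalAtlas 𝓘(ℝ, E') n M')
    (hm : m ∈ φ.source) (hfm : f m ∈ ψ.source) (hf : ContMDiffAt 𝓘(ℝ, E) 𝓘(ℝ, E') n f m) :
    ContDiffAt ℝ n (ψ ∘ f ∘ φ.symm) (φ m) := by
  rw [← contMDiffAt_iff_contDiffAt]
  have hψ' := contMDiffAt_of_mem_maximalAtlas hψ hfm
  have hφ' := contMDiffAt_symm_of_mem_maximalAtlas hφ (φ.map_source hm)
  rw [← φ.left_inv hm] at hψ' hf
  exact hψ'.comp (φ m) (hf.comp (φ m) hφ')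

theorem mfderiv_chart_comp_mfderiv
    (hφ : φ ∈ IsManifold.maximalAtlas 𝓘(ℝ, E) 1 M)
    (hψ : ψ ∈ IsManifold.maximalAtlas 𝓘(ℝ, E') 1 M')
    (hm : m ∈ φ.source) (hfm : f m ∈ ψ.source) (hf : MDifferentiableAt 𝓘(ℝ, E) 𝓘(ℝ, E') f m)
    (hG : DifferentiableAt ℝ (ψ ∘ f ∘ φ.symm) (φ m)) :
    (mfderiv 𝓘(ℝ, E') 𝓘(ℝ, E') ψ (f m)).comp (mfderiv 𝓘(ℝ, E) 𝓘(ℝ, E') f m) =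
      (fderiv ℝ (ψ ∘ f ∘ φ.symm) (φ m)).comp (mfderiv 𝓘(ℝ, E) 𝓘(ℝ, E) φ m) := by
  have hlocal : ψ ∘ f =ᶠ[𝓝 m] (ψ ∘ f ∘ φ.symm) ∘ φ := by
    filter_upwards [φ.open_source.mem_nhds hm] with q hq
    simp only [Function.comp_apply, φ.left_inv hq]
  have hcomp := mfderiv_comp m hG.mdifferentiableAt (mdifferentiableAt_of_mem_maximalAtlas hφ hm)
  rw [mfderiv_eq_fderiv] at hcomp
  exact (mfderiv_comp m (mdifferentiableAt_of_mem_maximalAtlas hψ hfm) hf).symm.trans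
    (hlocal.mfderiv_eq.trans hcomp)

theorem IsControlledOn.pushforward_of_chart {V : Type*} [NormedAddCommGroup V] [NormedSpace ℝ V]
    {ρ : ℝ × ℝ → ℝ} {x : ℝ → V} {a b : ℝ} (hρ : IsIncrementBound ρ x a b)
    (hφ : φ ∈ IsManifold.maximalAtlas 𝓘(ℝ, E) 1 M)
    (hψ : ψ ∈ IsManifold.maximalAtlas 𝓘(ℝ, E') 1 M')
    (hf : MDifferentiable 𝓘(ℝ, E) 𝓘(ℝ, E') f) {y : ℝ → M}
    {y' : (s : ℝ) → V →L[ℝ] TangentSpace 𝓘(ℝ, E) (y s)} {B : Set E} (hB : Convex ℝ B)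
    (hyφ : ∀ s ∈ Icc a b, y s ∈ φ.source ∩ φ ⁻¹' B) (hyψ : ∀ s ∈ Icc a b, f (y s) ∈ ψ.source)
    (hG : ∀ v ∈ B, DifferentiableAt ℝ (ψ ∘ f ∘ φ.symm) v)
    {K : NNReal} (hK : LipschitzOnWith K (fderiv ℝ (ψ ∘ f ∘ φ.symm)) B)
    (h : IsControlledOn ρ x a b (fun s => φ (y s))
      (fun s => (mfderiv 𝓘(ℝ, E) 𝓘(ℝ, E) φ (y s)).comp (y' s))) :
    IsControlledOn ρ x a b (fun s => ψ (f (y s)))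
      (fun s => (mfderiv 𝓘(ℝ, E') 𝓘(ℝ, E') ψ (f (y s))).comp
        ((mfderiv 𝓘(ℝ, E) 𝓘(ℝ, E') f (y s)).comp (y' s))) := by
  refine (h.comp_of_lipschitzOnWith hρ hB (fun s hs => (hyφ s hs).2)
    (fun v hv => (hG v hv).hasFDerivAt.hasFDerivWithinAt) hK).congr
    (fun s hs => ?_) fun s hs => ?_
  · simp only [Function.comp_apply, φ.left_inv (hyφ s hs).1]
  · have hchain := mfderiv_chart_comp_mfderiv hφ hψ (hyφ s hs).1 (hyψ s hs) (hf (y s))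
      (hG _ (hyφ s hs).2)
    exact congrArg (fun A : TangentSpace 𝓘(ℝ, E) (y s) →L[ℝ] E' => A.comp (y' s)) hchain.symm

end Charts

/-- The length scale `ω s t ^ (1 / p)` of first-order increments of a path with control `ω`. -/
def controlScale (p : ℝ) (ω : ℝ → ℝ → ℝ) (q : ℝ × ℝ) : ℝ := ω q.1 q.2 ^ (1 / p)

namespace IsControl

variable {T p : ℝ} {ω : ℝ → ℝ → ℝ}

theorem mono (hω : IsControl T ω) {q r : ℝ × ℝ} (hq : q ∈ timeSimplex 0 T)
    (hr : r ∈ timeSimplex q.1 q.2) : ω r.1 r.2 ≤ ω q.1 q.2 := by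
  obtain ⟨h0q, -, hqT⟩ := hq
  obtain ⟨hqr, hr, hrq⟩ := hr
  have hsplit := hω.superadditive h0q hqr (hr.trans hrq) hqT
  have hsplit' := hω.superadditive (h0q.trans hqr) hr hrq hqT
  have hleft := hω.nonneg h0q hqr (hr.trans (hrq.trans hqT))
  have hright := hω.nonneg (h0q.trans (hqr.trans hr)) hrq hqT
  linarith

theorem isIncrementBound_controlScale (hω : IsControl T ω) (hp : 0 ≤ p) {V : Type*}
    [NormedAddCommGroup V] {x : ℝ → V}
    (hx : ∀ ⦃s t : ℝ⦄, 0 ≤ s → s ≤ t → t ≤ T → ‖x t - x s‖ ≤ ω s t ^ (1 / p)) :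
    IsIncrementBound (controlScale p ω) x 0 T where
  mono q hq r hr := by
    have hr' : r ∈ timeSimplex 0 T := timeSimplex_subset hq.1 hq.2.2 hr
    exact Real.rpow_le_rpow (hω.nonneg hr'.1 hr'.2.1 hr'.2.2) (hω.mono hq hr) (by positivity)
  norm_sub_le q hq := hx hq.1 hq.2.1 hq.2.2

theorem controlScale_nonneg (hω : IsControl T ω) {q : ℝ × ℝ} (hq : q ∈ timeSimplex 0 T) :
    0 ≤ controlScale p ω q :=
  Real.rpow_nonneg (hω.nonneg hq.1 hq.2.1 hq.2.2) _

theorem controlScale_sq (hω : IsControl T ω) {q : ℝ × ℝ} (hq : q ∈ timeSimplex 0 T) :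
    controlScale p ω q ^ 2 = ω q.1 q.2 ^ (2 / p) := by
  rw [controlScale, ← Real.rpow_mul_natCast (hω.nonneg hq.1 hq.2.1 hq.2.2)]
  congr 1
  push_cast
  ring

theorem isControlledOn_controlScale_iff (hω : IsControl T ω) {V E : Type*}
    [NormedAddCommGroup V] [NormedSpace ℝ V] [NormedAddCommGroup E] [NormedSpace ℝ E]
    {x : ℝ → V} {a b : ℝ} (ha : 0 ≤ a) (hb : b ≤ T) {z : ℝ → E} {Z : ℝ → V →L[ℝ] E} :
    IsControlledOn (controlScale p ω) x a b z Z ↔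
      ∃ C : ℝ, ∀ ⦃s t : ℝ⦄, a ≤ s → s ≤ t → t ≤ b →
        ‖z t - z s - Z s (x t - x s)‖ ≤ C * ω s t ^ (2 / p) ∧
        ‖Z t - Z s‖ ≤ C * ω s t ^ (1 / p) := by
  have hsub : timeSimplex a b ⊆ timeSimplex 0 T := timeSimplex_subset ha hb
  have hnonneg {q : ℝ × ℝ} (hq : q ∈ timeSimplex a b) : 0 ≤ controlScale p ω q :=
    hω.controlScale_nonneg (hsub hq)
  constructor
  · rintro ⟨hrem, hderiv⟩
    obtain ⟨C, hC⟩ := isBigO_principal.1 hrem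
    obtain ⟨D, hD⟩ := isBigO_principal.1 hderiv
    refine ⟨max C D, fun s t hs hst ht => ?_⟩
    have hq : (s, t) ∈ timeSimplex a b := ⟨hs, hst, ht⟩
    have hremq := hC (s, t) hq
    have hderivq := hD (s, t) hq
    rw [norm_pow, Real.norm_of_nonneg (hnonneg hq)] at hremq
    rw [Real.norm_of_nonneg (hnonneg hq)] at hderivq
    refine ⟨?_, hderivq.trans (mul_le_mul_of_nonneg_right (le_max_right C D) (hnonneg hq))⟩
    rw [← hω.controlScale_sq (q := (s, t)) (hsub hq)]
    exact hremq.trans (mul_le_mul_of_nonneg_right (le_max_left C D) (sq_nonneg _))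
  · rintro ⟨C, hC⟩
    constructor <;> refine isBigO_principal.2 ⟨C, fun q hq => ?_⟩
    · rw [norm_pow, Real.norm_of_nonneg (hnonneg hq), hω.controlScale_sq (hsub hq)]
      exact (hC hq.1 hq.2.1 hq.2.2).1
    · rw [Real.norm_of_nonneg (hnonneg hq)]
      exact (hC hq.1 hq.2.1 hq.2.2).2

end IsControl

theorem isChartCRP_iff_isControlledOn {T p : ℝ} {k : ℕ} {ω : ℝ → ℝ → ℝ} (hω : IsControl T ω)
    {x : ℝ → Euc k} {d : ℕ} {M : Type*} [TopologicalSpace M] [ChartedSpace (Euc d) M]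
    [IsManifold (𝓡 d) (⊤ : ℕ∞) M] {y : ℝ → M}
    {y' : (s : ℝ) → Euc k →L[ℝ] TangentSpace (𝓡 d) (y s)} :
    IsChartCRP T p ω x y y' ↔
      ∀ φ ∈ IsManifold.maximalAtlas (𝓡 d) (⊤ : ℕ∞) M, ∀ a b : ℝ, 0 ≤ a → a ≤ b → b ≤ T →
        (∀ s ∈ Icc a b, y s ∈ φ.source) →
        IsControlledOn (controlScale p ω) x a b (fun s => φ (y s))
          (fun s => (chartDeriv φ (y s)).comp (y' s)) := by
  have hiff (φ : OpenPartialHomeomorph M (Euc d)) {a b : ℝ} (ha : 0 ≤ a) (hb : b ≤ T) :=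
    hω.isControlledOn_controlScale_iff (p := p) (x := x) ha hb (z := fun s => φ (y s))
      (Z := fun s => (chartDeriv φ (y s)).comp (y' s))
  exact ⟨fun h φ hφ a b ha hab hb hy => (hiff φ ha hb).2 (h φ hφ a b ha hab hb hy),
    fun h φ hφ a b ha hab hb hy => (hiff φ ha hb).1 (h φ hφ a b ha hab hb hy)⟩

theorem pushforward_isChartCRP_general
    {T p : ℝ} (hp : 0 < p) {k : ℕ} {ω : ℝ → ℝ → ℝ} (hω : IsControl T ω) {x : ℝ → Euc k}
    (hx : ∀ ⦃s t : ℝ⦄, 0 ≤ s → s ≤ t → t ≤ T → ‖x t - x s‖ ≤ ω s t ^ (1 / p))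
    {d : ℕ} {M : Type*} [TopologicalSpace M] [ChartedSpace (Euc d) M]
    [IsManifold (𝓡 d) (⊤ : ℕ∞) M]
    {d' : ℕ} {M' : Type*} [TopologicalSpace M'] [ChartedSpace (Euc d') M']
    [IsManifold (𝓡 d') (⊤ : ℕ∞) M']
    {f : M → M'} (hf : ContMDiff (𝓡 d) (𝓡 d') 2 f)
    {y : ℝ → M} (hy : ContinuousOn y (Set.Icc 0 T))
    {y' : (s : ℝ) → Euc k →L[ℝ] TangentSpace (𝓡 d) (y s)} (hyCRP : IsChartCRP T p ω x y y') :
    ContinuousOn (fun s => f (y s)) (Set.Icc 0 T) ∧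
    IsChartCRP T p ω x (fun s => f (y s))
      (fun s => (mfderiv (𝓡 d) (𝓡 d') f (y s)).comp (y' s)) := by
  refine ⟨hf.continuous.comp_continuousOn hy, ?_⟩
  rw [isChartCRP_iff_isControlledOn hω] at hyCRP ⊢
  intro ψ hψ a b ha hab hb hsrc
  have hρ := (hω.isIncrementBound_controlScale hp.le hx).subinterval ha hb
  refine .of_locally hρ hab fun s₀ hs₀ => ?_
  let φ := chartAt (Euc d) (y s₀)
  have hφ : φ ∈ IsManifold.maximalAtlas (𝓡 d) (⊤ : ℕ∞) M := IsManifold.chart_mem_maximalAtlas _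
  have hφs₀ : y s₀ ∈ φ.source := mem_chart_source _ _
  obtain ⟨r, hr, hG, K, hK⟩ := exists_ball_lipschitzOnWith_fderiv <| contDiffAt_comp_chart_symm
    (IsManifold.maximalAtlas_subset_of_le ENat.LEInfty.out hφ)
    (IsManifold.maximalAtlas_subset_of_le ENat.LEInfty.out hψ) hφs₀ (hsrc s₀ hs₀) (hf (y s₀))
  have hnhds : φ.source ∩ φ ⁻¹' Metric.ball (φ (y s₀)) r ∈ 𝓝 (y s₀) :=
    (φ.isOpen_inter_preimage Metric.isOpen_ball).mem_nhds ⟨hφs₀, Metric.mem_ball_self hr⟩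
  refine ⟨_, (hy.mono (Icc_subset_Icc ha hb)) s₀ hs₀ hnhds, fun u v hu huv hv hsub => ?_⟩
  exact .pushforward_of_chart (hρ.subinterval hu hv)
    (IsManifold.maximalAtlas_subset_of_le ENat.LEInfty.out hφ)
    (IsManifold.maximalAtlas_subset_of_le ENat.LEInfty.out hψ) (hf.mdifferentiable two_ne_zero)
    (convex_ball _ _) hsub (fun s hs => hsrc s ⟨hu.trans hs.1, hs.2.trans hv⟩) hG hK
    (hyCRP φ hφ u v (ha.trans hu) huv (hv.trans hb) fun s hs => (hsub hs).1)

/-- **Push-forwards of controlled rough paths are controlled rough paths.**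
If `f : M → M̃` is smooth and `(y, y')` is a chart-controlled rough path in `M`, then
`(f ∘ y, f_* ∘ y')` is a chart-controlled rough path in `M̃`. -/
theorem pushforward_isChartCRP
    {T p : ℝ} (hT : 0 < T) (hp1 : 1 ≤ p) (hp3 : p < 3) {k : ℕ} (hk : 1 ≤ k)
    {ω : ℝ → ℝ → ℝ} (hω : IsControl T ω)
    {x : ℝ → Euc k} {XX : ℝ → ℝ → EuclideanSpace ℝ (Fin k × Fin k)}
    (hX : IsRoughPath T p ω x XX) (hgeo : IsWeakGeometric T x XX)
    {d : ℕ} {M : Type*} [TopologicalSpace M] [ChartedSpace (Euc d) M]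
    [IsManifold (𝓡 d) (⊤ : ℕ∞) M] [T2Space M] [SecondCountableTopology M]
    {d' : ℕ} {M' : Type*} [TopologicalSpace M'] [ChartedSpace (Euc d') M']
    [IsManifold (𝓡 d') (⊤ : ℕ∞) M'] [T2Space M'] [SecondCountableTopology M']
    {f : M → M'} (hf : ContMDiff (𝓡 d) (𝓡 d') (⊤ : ℕ∞) f)
    {y : ℝ → M} (hy : ContinuousOn y (Set.Icc 0 T))
    {y' : (s : ℝ) → Euc k →L[ℝ] TangentSpace (𝓡 d) (y s)}
    (hyCRP : IsChartCRP T p ω x y y') :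
    ContinuousOn (fun s => f (y s)) (Set.Icc 0 T) ∧
    IsChartCRP T p ω x (fun s => f (y s))
      (fun s => (mfderiv (𝓡 d) (𝓡 d') f (y s)).comp (y' s)) := by
  exact pushforward_isChartCRP_general (zero_lt_one.trans_le hp1) hω hX.bound_x
    (hf.of_le ENat.LEInfty.out) hy hyCRP
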